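/- Assume additionally λ₁ > 0, λ₂ < 0, α₂ < 4 < α₃, and let θ be a real number with 4/α₃ < θ < 1. Let M ≥ 0 and C, δ > 0 be real numbers such that N₂ ≤ C·M + δ·N₃ and δ·|λ₂|·(α₃θ−α₂)/(α₂+2) ≤ |λ₃|·α₃·(1−θ)/(α₃+2). Then Y ≥ ((α₃θ − 4)/2)·G − (|λ₂|·C·(α₃θ−α₂)/(α₂+2))·M − α₃θ·E. -/

import Mathlib

/-!
Adding `κE` to `Y` turns the kinetic coefficient into `(κ - 4) / 2` and gives the `j`-th power the
coefficient `λⱼ (κ - αⱼ) / (αⱼ + 2)`. For `κ = α₃θ` the defocusing first term is nonnegative, and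
`θ < 1` leaves the positive multiple `|λ₃| α₃ (1 - θ) / (α₃ + 2)` of `N₃`, which absorbs the
`N₃`-part of the interpolation bound for `N₂`.
-/

section PowerNonlinearities

variable {ι : Type*} [Fintype ι]

/-- The energy of a nonlinear Schrödinger equation with nonlinearity `∑ j, l j * |u| ^ α j * u`,
as a function of `G = ‖u_x‖²` (norm of `L²`) and `N j = ‖u‖ ^ (α j + 2)` (norm of `L^(α j + 2)`). -/
noncomputable def nlsEnergy (G : ℝ) (l α N : ι → ℝ) : ℝ :=
  G / 2 + ∑ j, l j * N j / (α j + 2)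

/-- The virial functional of the same equation in space dimension one, normalized so that the
variance `V = ‖x u‖²` satisfies `V_tt = -4 * nlsVirial`. -/
noncomputable def nlsVirial (G : ℝ) (l α N : ι → ℝ) : ℝ :=
  -2 * G - ∑ j, l j * α j * N j / (α j + 2)

theorem nlsVirial_add_mul_nlsEnergy (κ G : ℝ) (l α N : ι → ℝ) :
    nlsVirial G l α N + κ * nlsEnergy G l α N =
      (κ - 4) / 2 * G + ∑ j, l j * ((κ - α j) / (α j + 2)) * N j := by
  have sum_combine : ∑ j, l j * ((κ - α j) / (α j + 2)) * N j =
      κ * ∑ j, l j * N j / (α j + 2) - ∑ j, l j * α j * N j / (α j + 2) := by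
    rw [Finset.mul_sum, ← Finset.sum_sub_distrib]
    exact Finset.sum_congr rfl fun j _ ↦ by ring
  rw [sum_combine, nlsVirial, nlsEnergy]
  ring

end PowerNonlinearities

theorem neg_abs_mul_le_mul_add_mul {R : Type*} [CommRing R] [LinearOrder R] [IsOrderedRing R]
    {a b m x y δ : R} (hx : 0 ≤ x) (hy : 0 ≤ y) (hxy : x ≤ m + δ * y) (hab : δ * |a| ≤ b) :
    -(|a| * m) ≤ a * x + b * y := by
  have absorbed : |a| * x ≤ |a| * m + b * y :=
    calc
      |a| * x ≤ |a| * (m + δ * y) := by gcongr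
      _ = |a| * m + δ * |a| * y := by ring
      _ ≤ |a| * m + b * y := by gcongr
  have abs_bound : -|a| * x ≤ a * x := mul_le_mul_of_nonneg_right (neg_abs_le a) hx
  linear_combination absorbed + abs_bound

theorem virial_case3C_general
    {G N₁ N₂ N₃ : ℝ} (hN₁ : 0 ≤ N₁) (hN₂ : 0 ≤ N₂) (hN₃ : 0 ≤ N₃)
    {l₁ l₂ l₃ : ℝ} (hl₁ : 0 ≤ l₁) (hl₃ : l₃ ≤ 0)
    {α₁ α₂ α₃ : ℝ} (hα₁ : 0 < α₁) (h₁₂ : α₁ < α₂) (h₂₃ : α₂ < α₃)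
    {E Y : ℝ}
    (hE : E = G / 2 + l₁ * N₁ / (α₁ + 2) + l₂ * N₂ / (α₂ + 2) + l₃ * N₃ / (α₃ + 2))
    (hY : Y = -2 * G - l₁ * α₁ * N₁ / (α₁ + 2) - l₂ * α₂ * N₂ / (α₂ + 2)
      - l₃ * α₃ * N₃ / (α₃ + 2))
    {θ : ℝ} (hθ : α₂ / α₃ ≤ θ) {M C δ : ℝ} (hinterp : N₂ ≤ C * M + δ * N₃)
    (hδ : δ * |l₂| * (α₃ * θ - α₂) / (α₂ + 2) ≤ |l₃| * α₃ * (1 - θ) / (α₃ + 2)) :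
    Y ≥ ((α₃ * θ - 4) / 2) * G - (|l₂| * C * (α₃ * θ - α₂) / (α₂ + 2)) * M - α₃ * θ * E := by
  have hα₂ : α₂ ≤ α₃ * θ := (div_le_iff₀' (by linarith)).1 hθ
  have virial_identity : Y + α₃ * θ * E = (α₃ * θ - 4) / 2 * G +
      (l₁ * ((α₃ * θ - α₁) / (α₁ + 2)) * N₁ + l₂ * ((α₃ * θ - α₂) / (α₂ + 2)) * N₂ +
        l₃ * ((α₃ * θ - α₃) / (α₃ + 2)) * N₃) := by
    have h := nlsVirial_add_mul_nlsEnergy (α₃ * θ) G ![l₁, l₂, l₃] ![α₁, α₂, α₃] ![N₁, N₂, N₃]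
    simpa [nlsVirial, nlsEnergy, Fin.sum_univ_three, hE, hY, add_assoc, sub_sub] using h
  have first_nonneg : 0 ≤ l₁ * ((α₃ * θ - α₁) / (α₁ + 2)) * N₁ :=
    mul_nonneg (mul_nonneg hl₁ (div_nonneg (by linarith) (by linarith))) hN₁
  have weight_nonneg : 0 ≤ (α₃ * θ - α₂) / (α₂ + 2) := div_nonneg (by linarith) (by linarith)
  have abs_second : |l₂ * ((α₃ * θ - α₂) / (α₂ + 2))| = |l₂| * ((α₃ * θ - α₂) / (α₂ + 2)) := by
    rw [abs_mul, abs_of_nonneg weight_nonneg]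
  have absorption : -(|l₂ * ((α₃ * θ - α₂) / (α₂ + 2))| * (C * M)) ≤
      l₂ * ((α₃ * θ - α₂) / (α₂ + 2)) * N₂ + |l₃| * α₃ * (1 - θ) / (α₃ + 2) * N₃ :=
    neg_abs_mul_le_mul_add_mul hN₂ hN₃ hinterp
      (by simpa only [abs_second, mul_assoc, mul_div_assoc] using hδ)
  rw [abs_second] at absorption
  have third_eq : l₃ * ((α₃ * θ - α₃) / (α₃ + 2)) * N₃ =
      |l₃| * α₃ * (1 - θ) / (α₃ + 2) * N₃ := by
    rw [abs_of_nonpos hl₃]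
    ring
  linear_combination first_nonneg + absorption - virial_identity - third_eq

theorem virial_case3C
    (G N₁ N₂ N₃ : ℝ) (hG : 0 ≤ G) (hN₁ : 0 ≤ N₁) (hN₂ : 0 ≤ N₂) (hN₃ : 0 ≤ N₃)
    (l₁ l₂ l₃ : ℝ) (hl₃ : l₃ < 0)
    (α₁ α₂ α₃ : ℝ) (hα₁ : 0 < α₁) (h₁₂ : α₁ < α₂) (h₂₃ : α₂ < α₃)
    (E Y : ℝ)
    (hE : E = G / 2 + l₁ * N₁ / (α₁ + 2) + l₂ * N₂ / (α₂ + 2) + l₃ * N₃ / (α₃ + 2))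
    (hY : Y = -2 * G - l₁ * α₁ * N₁ / (α₁ + 2) - l₂ * α₂ * N₂ / (α₂ + 2) - l₃ * α₃ * N₃ / (α₃ + 2))
    (hl₁ : 0 < l₁) (hl₂ : l₂ < 0) (hα₂4 : α₂ < 4) (h4α₃ : 4 < α₃)
    (θ : ℝ) (hθ₁ : 4 / α₃ < θ) (hθ₂ : θ < 1)
    (M C δ : ℝ) (hM : 0 ≤ M) (hC : 0 < C) (hδ : 0 < δ)
    (hinterp : N₂ ≤ C * M + δ * N₃)
    (hδsmall : δ * |l₂| * (α₃ * θ - α₂) / (α₂ + 2) ≤ |l₃| * α₃ * (1 - θ) / (α₃ + 2)) :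
    Y ≥ ((α₃ * θ - 4) / 2) * G - (|l₂| * C * (α₃ * θ - α₂) / (α₂ + 2)) * M - α₃ * θ * E := by
  have hθ : α₂ / α₃ ≤ θ := (div_le_div_of_nonneg_right hα₂4.le (by linarith)).trans hθ₁.le
  exact virial_case3C_general hN₁ hN₂ hN₃ hl₁.le hl₃.le hα₁ h₁₂ h₂₃ hE hY hθ hinterp hδsmall
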